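/- Let e₁, e₂ ∈ ℝ³ be unit vectors that are not parallel, i.e., e₁ × e₂ ≠ 0. Then the 3×3 real matrix Π = [e₁×]² + [e₂×]² is invertible (full rank). -/

import Mathlib

/-!
Put `t = |a|² + |b|²`. Since `[a×]² = a aᵀ - |a|² I`, the matrix `Π = [a×]² + [b×]²` is
`a aᵀ + b bᵀ - t I`. The eigenvalues of `a aᵀ + b bᵀ` are `0, l, m` with `l + m = t` and
`l m = |a × b|²`, so `det Π = (-t) (l - t) (m - t) = -t |a × b|²`. This determinant identity is
polynomial in the coordinates; its right side is nonzero when `a × b ≠ 0` and `t = 2`.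
-/

open Matrix

/-- The skew-symmetric cross-product matrix `[a×]` of `a ∈ ℝ³`,
satisfying `[a×] v = a × v` for all `v`. -/
noncomputable def skewMat (a : EuclideanSpace ℝ (Fin 3)) : Matrix (Fin 3) (Fin 3) ℝ :=
  !![0, -a 2, a 1;
     a 2, 0, -a 0;
     -a 1, a 0, 0]

theorem det_sq_add_sq (a b : EuclideanSpace ℝ (Fin 3)) :
    (skewMat a ^ 2 + skewMat b ^ 2).det =
      -(‖a‖ ^ 2 + ‖b‖ ^ 2) * (crossProduct a b ⬝ᵥ crossProduct a b) := by
  simp only [EuclideanSpace.real_norm_sq_eq, Fin.sum_univ_three]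
  simp [skewMat, det_fin_three, pow_two, cross_apply]
  ring

/-- Proposition 1: if `e₁, e₂` are non-parallel unit vectors in `ℝ³`
(`e₁ × e₂ ≠ 0`), then `Π = [e₁×]² + [e₂×]²` is invertible. -/
theorem pi_matrix_invertible (e₁ e₂ : EuclideanSpace ℝ (Fin 3))
    (h₁ : ‖e₁‖ = 1) (h₂ : ‖e₂‖ = 1)
    (hcross : crossProduct e₁ e₂ ≠ 0) :
    IsUnit (skewMat e₁ ^ 2 + skewMat e₂ ^ 2) := by
  rw [isUnit_iff_isUnit_det, det_sq_add_sq, h₁, h₂, isUnit_iff_ne_zero]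
  exact mul_ne_zero (by norm_num) (dotProduct_self_eq_zero.not.mpr hcross)
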